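/- arXiv:1112.0920 — 2 statements merged into one kernel-verified Lean document; each statement's English description precedes it below -/
import Mathlib

section
/- Let E be a field, Γ a subgroup of ℝ, and let R ⊆ E((t^Γ)) be the set of series whose support intersected with any interval (−∞, γ) is finite. Then R coincides with the completion of the subfield E(t^Γ) (generated by E and all t^γ, γ ∈ Γ) with respect to the valuation v; in particular the subring E[t^Γ] is dense in R. -/
/-!
Two series agree to high valuation exactly when they agree on all exponents up to a large bound.
Hence `R` is closed for the valuation, and truncating the elements of `R` shows that `E[t^Γ]` is
dense in it. The remaining point is that `R`, clearly a ring, is a field: an element of `R` is a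
monomial times `1 - u` with `u` of positive valuation, and since the value group is archimedean the
geometric series in `u` converges to `(1 - u)⁻¹`, which therefore lies in the closed ring `R`. So
`E(t^Γ) ⊆ R`, and `R` is its closure.
-/

theorem nsmul_order_add_order_le_order_pow_mul {Γ E : Type*} [AddCommMonoid Γ]
    [LinearOrder Γ] [IsOrderedCancelAddMonoid Γ] [Semiring E] {u v : HahnSeries Γ E} {n : ℕ}
    (hu : u ≠ 0) (h : u ^ n * v ≠ 0) : n • u.order + v.order ≤ (u ^ n * v).order := by
  rw [← WithTop.coe_le_coe, WithTop.coe_add, WithTop.coe_nsmul,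
    HahnSeries.order_eq_orderTop_of_ne_zero hu,
    HahnSeries.order_eq_orderTop_of_ne_zero (right_ne_zero_of_mul h),
    HahnSeries.order_eq_orderTop_of_ne_zero h]
  exact (add_le_add_left HahnSeries.orderTop_nsmul_le_orderTop_pow _).trans
    HahnSeries.orderTop_add_le_mul

section ValuationClosure

variable {Λ : Type*} [AddCommGroup Λ] [LinearOrder Λ] {Γ : AddSubgroup Λ} {E : Type*}

theorem eq_zero_or_lt_order_iff_coeff_eq_zero [Zero E] {x : HahnSeries Γ E} {γ : Λ} :
    x = 0 ∨ γ < (x.order : Λ) ↔ ∀ g : Γ, (g : Λ) ≤ γ → x.coeff g = 0 := by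
  constructor
  · rintro (rfl | hγ) g hg
    · exact HahnSeries.coeff_zero
    · exact HahnSeries.coeff_eq_zero_of_lt_order (hg.trans_lt hγ)
  · intro h
    by_contra! hx
    exact hx.1 (HahnSeries.coeff_order_eq_zero.mp (h _ hx.2))

/-- The closure of a set of Hahn series in the valuation topology, with bounds `γ` ranging over all
of `Λ ≥ Γ`. Since the field of all Hahn series is complete, the closure of a subfield models its
completion. The alternative `a - b = 0` stands for infinite valuation, because
`HahnSeries.order 0 = 0`. -/
def valuationClosure [AddGroup E] (S : Set (HahnSeries Γ E)) : Set (HahnSeries Γ E) :=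
  {a | ∀ γ : Λ, ∃ b ∈ S, a - b = 0 ∨ γ < ((a - b).order : Λ)}

theorem valuationClosure_mono [AddGroup E] {S T : Set (HahnSeries Γ E)} (h : S ⊆ T) :
    valuationClosure S ⊆ valuationClosure T :=
  fun _ ha γ => (ha γ).imp fun _ hb => ⟨h hb.1, hb.2⟩

theorem mem_valuationClosure_iff_coeff_eq [AddGroup E] {S : Set (HahnSeries Γ E)}
    {a : HahnSeries Γ E} :
    a ∈ valuationClosure S ↔
      ∀ γ : Λ, ∃ b ∈ S, ∀ g : Γ, (g : Λ) ≤ γ → a.coeff g = b.coeff g := by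
  refine forall_congr' fun γ => exists_congr fun b => and_congr_right fun _ => ?_
  rw [eq_zero_or_lt_order_iff_coeff_eq_zero]
  simp only [HahnSeries.coeff_sub, sub_eq_zero]

end ValuationClosure

section Ring

open scoped Pointwise

variable {Λ : Type*} [AddCommGroup Λ] [LinearOrder Λ] [IsOrderedAddMonoid Λ]

/-- The ring `R` of Hahn series with exponents in `Γ ≤ Λ` whose support meets every interval
`(-∞, γ)`, `γ ∈ Λ`, in a finite set. -/
def omegaTypeSubring (E : Type*) [Ring E] (Γ : AddSubgroup Λ) : Subring (HahnSeries Γ E) where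
  carrier := {a | ∀ γ : Λ, {g : Γ | g ∈ a.support ∧ (g : Λ) < γ}.Finite}
  zero_mem' γ := by simp
  one_mem' γ :=
    (Set.finite_singleton (0 : Γ)).subset fun _ hg => HahnSeries.support_single_subset hg.1
  add_mem' {a b} ha hb γ := ((ha γ).union (hb γ)).subset fun _ hg =>
    (HahnSeries.support_add_subset a b hg.1).imp (⟨·, hg.2⟩) (⟨·, hg.2⟩)
  neg_mem' {a} ha γ := by simpa using ha γ
  mul_mem' {a b} ha hb γ :=
    ((ha (γ - b.order)).add (hb (γ - a.order))).subset fun g hg => by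
      obtain ⟨x, hx, y, hy, rfl⟩ := HahnSeries.support_mul_subset hg.1
      have hax : (a.order : Λ) ≤ x := HahnSeries.order_le_of_coeff_ne_zero hx
      have hby : (b.order : Λ) ≤ y := HahnSeries.order_le_of_coeff_ne_zero hy
      have hxy : (x : Λ) + y < γ := hg.2
      refine ⟨x, ⟨hx, lt_sub_iff_add_lt.mpr ?_⟩, y, ⟨hy, lt_sub_iff_add_lt'.mpr ?_⟩, rfl⟩
      · exact (add_le_add_right hby _).trans_lt hxy
      · exact (add_le_add_left hax _).trans_lt hxy

/-- The coefficients and the monomials `t ^ γ`, which generate `E[t^Γ]` as a ring and `E(t^Γ)` as a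
field. -/
noncomputable def monomialGenerators (E : Type*) [Ring E] (Γ : AddSubgroup Λ) :
    Set (HahnSeries Γ E) :=
  Set.range (HahnSeries.C : E →+* HahnSeries Γ E) ∪ {x | ∃ γ : Γ, x = HahnSeries.single γ (1 : E)}

/-- The subring `E[t^Γ]` of `E((t^Γ))` generated by `E` and the monomials `t ^ γ`, `γ ∈ Γ`. -/
noncomputable def monomialSubring (E : Type*) [Ring E] (Γ : AddSubgroup Λ) :
    Subring (HahnSeries Γ E) :=
  Subring.closure (monomialGenerators E Γ)

variable {E : Type*} [Ring E] {Γ : AddSubgroup Λ}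

theorem single_mem_omegaTypeSubring (g : Γ) (c : E) :
    HahnSeries.single g c ∈ omegaTypeSubring E Γ :=
  fun _ => (Set.finite_singleton g).subset fun _ hx => HahnSeries.support_single_subset hx.1

theorem monomialGenerators_subset_omegaTypeSubring :
    monomialGenerators E Γ ⊆ omegaTypeSubring E Γ := by
  rintro _ (⟨c, rfl⟩ | ⟨g, rfl⟩)
  · exact single_mem_omegaTypeSubring 0 c
  · exact single_mem_omegaTypeSubring g 1

theorem single_mem_monomialSubring (g : Γ) (c : E) :
    HahnSeries.single g c ∈ monomialSubring E Γ := by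
  have hc : HahnSeries.C c ∈ monomialSubring E Γ := Subring.subset_closure (.inl ⟨c, rfl⟩)
  have hg : HahnSeries.single g 1 ∈ monomialSubring E Γ := Subring.subset_closure (.inr ⟨g, rfl⟩)
  simpa only [HahnSeries.C_apply, HahnSeries.single_mul_single, zero_add, mul_one]
    using mul_mem hc hg

theorem omegaTypeSubring_subset_valuationClosure_monomialSubring :
    (omegaTypeSubring E Γ : Set (HahnSeries Γ E)) ⊆ valuationClosure (monomialSubring E Γ) := by
  intro a ha
  refine mem_valuationClosure_iff_coeff_eq.mpr fun γ => ?_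
  have hfin : {g : Γ | g ∈ a.support ∧ (g : Λ) ≤ γ}.Finite := by
    have hγ : {g : Γ | (g : Λ) = γ}.Finite :=
      (Set.finite_singleton γ).preimage Subtype.val_injective.injOn
    exact ((ha γ).union hγ).subset fun g hg =>
      hg.2.lt_or_eq.imp (⟨hg.1, ·⟩) id
  refine ⟨∑ g ∈ hfin.toFinset, HahnSeries.single g (a.coeff g),
    sum_mem fun g _ => single_mem_monomialSubring g _, fun g hg => ?_⟩
  rw [HahnSeries.coeff_sum, Finset.sum_eq_single g, HahnSeries.coeff_single_same]
  · exact fun x _ hx => HahnSeries.coeff_single_of_ne hx.symm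
  · intro hg_notMem
    have hag : a.coeff g = 0 := by simpa [hg] using hg_notMem
    rw [hag, HahnSeries.single_eq_zero, HahnSeries.coeff_zero]

theorem valuationClosure_omegaTypeSubring_subset :
    valuationClosure (omegaTypeSubring E Γ) ⊆ (omegaTypeSubring E Γ : Set (HahnSeries Γ E)) := by
  intro a ha γ
  obtain ⟨b, hb, hab⟩ := mem_valuationClosure_iff_coeff_eq.mp ha γ
  refine (hb γ).subset fun g hg => ⟨?_, hg.2⟩
  rw [HahnSeries.mem_support, ← hab g hg.2.le]
  exact hg.1

theorem mem_omegaTypeSubring_of_one_sub_mul_eq_one [Archimedean Λ] {u v : HahnSeries Γ E}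
    (hu : u ∈ omegaTypeSubring E Γ) (hpos : 0 < u.orderTop) (huv : (1 - u) * v = 1) :
    v ∈ omegaTypeSubring E Γ := by
  rcases eq_or_ne u 0 with rfl | hu0
  · obtain rfl : v = 1 := by simpa only [sub_zero, one_mul] using huv
    exact one_mem _
  refine valuationClosure_omegaTypeSubring_subset fun γ => ?_
  have hord : (0 : Λ) < u.order := by
    rw [← HahnSeries.order_eq_orderTop_of_ne_zero hu0] at hpos
    exact_mod_cast hpos
  obtain ⟨n, hn⟩ := exists_lt_nsmul hord (γ - v.order)
  refine ⟨∑ k ∈ Finset.range n, u ^ k, sum_mem fun k _ => pow_mem hu k,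
    or_iff_not_imp_left.mpr fun hne => ?_⟩
  have hsum : ∑ k ∈ Finset.range n, u ^ k = v - u ^ n * v := by
    calc ∑ k ∈ Finset.range n, u ^ k = (∑ k ∈ Finset.range n, u ^ k) * ((1 - u) * v) := by
          rw [huv, mul_one]
      _ = v - u ^ n * v := by rw [← mul_assoc, geom_sum_mul_neg, sub_mul, one_mul]
  rw [hsum, sub_sub_cancel] at hne ⊢
  calc γ < n • (u.order : Λ) + v.order := sub_lt_iff_lt_add.mp hn
    _ ≤ (u ^ n * v).order := nsmul_order_add_order_le_order_pow_mul hu0 hne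

end Ring

section Field

variable {Λ : Type*} [AddCommGroup Λ] [LinearOrder Λ] [IsOrderedAddMonoid Λ]

/-- The subfield `E(t^Γ)` of `E((t^Γ))` generated by `E` and the monomials `t ^ γ`, `γ ∈ Γ`. -/
noncomputable def monomialSubfield (E : Type*) [Field E] (Γ : AddSubgroup Λ) :
    Subfield (HahnSeries Γ E) :=
  Subfield.closure (monomialGenerators E Γ)

theorem inv_mem_omegaTypeSubring [Archimedean Λ] {E : Type*} [Field E] {Γ : AddSubgroup Λ}
    {a : HahnSeries Γ E} (ha : a ∈ omegaTypeSubring E Γ) : a⁻¹ ∈ omegaTypeSubring E Γ := by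
  rcases eq_or_ne a 0 with rfl | ha0
  · simpa only [inv_zero] using zero_mem (omegaTypeSubring E Γ)
  have hlead : a.leadingCoeff ≠ 0 := HahnSeries.leadingCoeff_ne_zero.mpr ha0
  set m : HahnSeries Γ E := HahnSeries.single (-a.order) a.leadingCoeff⁻¹
  have hm : m ∈ omegaTypeSubring E Γ := single_mem_omegaTypeSubring _ _
  have hm0 : m ≠ 0 := HahnSeries.single_ne_zero (inv_ne_zero hlead)
  have hpos : 0 < (1 - m * a).orderTop :=
    HahnSeries.unit_aux a (inv_mul_cancel₀ hlead) _ (neg_add_cancel a.order)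
  have hinv : (m * a)⁻¹ ∈ omegaTypeSubring E Γ :=
    mem_omegaTypeSubring_of_one_sub_mul_eq_one (sub_mem (one_mem _) (mul_mem hm ha)) hpos <| by
      rw [sub_sub_cancel, mul_inv_cancel₀ (mul_ne_zero hm0 ha0)]
  have hfactor : a⁻¹ = m * (m * a)⁻¹ := by
    rw [mul_inv, mul_inv_cancel_left₀ hm0]
  exact hfactor ▸ mul_mem hm hinv

/-- The ring `R` as a field, when the exponents lie in an archimedean group. -/
def omegaTypeSubfield [Archimedean Λ] (E : Type*) [Field E] (Γ : AddSubgroup Λ) :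
    Subfield (HahnSeries Γ E) where
  __ := omegaTypeSubring E Γ
  inv_mem' _ := inv_mem_omegaTypeSubring

theorem monomialSubfield_le_omegaTypeSubfield [Archimedean Λ] {E : Type*} [Field E]
    {Γ : AddSubgroup Λ} : monomialSubfield E Γ ≤ omegaTypeSubfield E Γ :=
  Subfield.closure_le.mpr monomialGenerators_subset_omegaTypeSubring

theorem completion_eq_omega_type_series_general [Archimedean Λ] (E : Type*) [Field E]
    (Γ : AddSubgroup Λ) :
    (omegaTypeSubring E Γ : Set (HahnSeries Γ E)) = valuationClosure (monomialSubfield E Γ) ∧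
      (omegaTypeSubring E Γ : Set (HahnSeries Γ E)) ⊆ valuationClosure (monomialSubring E Γ) := by
  have hdense := omegaTypeSubring_subset_valuationClosure_monomialSubring (E := E) (Γ := Γ)
  refine ⟨Set.Subset.antisymm ?_ ?_, hdense⟩
  · exact hdense.trans (valuationClosure_mono (Subfield.subring_closure_le _))
  · exact (valuationClosure_mono monomialSubfield_le_omegaTypeSubfield).trans
      valuationClosure_omegaTypeSubring_subset

end Field

/-- Let `E` be a field and `Γ ≤ ℝ`.  The set `R` of series in `E((t^Γ))` whose support
meets every interval `(−∞, γ)` in a finite set coincides with the completion of the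
subfield `E(t^Γ)` (generated by `E` and the monomials `t^γ`) with respect to the
valuation: it is exactly the set of elements approximable to arbitrary valuation by
elements of `E(t^Γ)`; in particular the subring `E[t^Γ]` is dense in `R`. -/
theorem completion_eq_omega_type_series (E : Type*) [Field E] (Γ : AddSubgroup ℝ) :
    ({a : HahnSeries ↥Γ E | ∀ γ : ℝ, {g : ↥Γ | g ∈ a.support ∧ (g : ℝ) < γ}.Finite}
      = {a : HahnSeries ↥Γ E | ∀ γ0 : ℝ,
          ∃ b ∈ Subfield.closure
              (Set.range (HahnSeries.C : E →+* HahnSeries ↥Γ E) ∪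
                {x | ∃ γ : ↥Γ, x = HahnSeries.single γ (1 : E)}),
            a - b = 0 ∨ γ0 < (((a - b).order : ↥Γ) : ℝ)})
    ∧ ∀ a : HahnSeries ↥Γ E,
        (∀ γ : ℝ, {g : ↥Γ | g ∈ a.support ∧ (g : ℝ) < γ}.Finite) →
        ∀ γ0 : ℝ,
          ∃ b ∈ Subring.closure
              (Set.range (HahnSeries.C : E →+* HahnSeries ↥Γ E) ∪
                {x | ∃ γ : ↥Γ, x = HahnSeries.single γ (1 : E)}),
            a - b = 0 ∨ γ0 < (((a - b).order : ↥Γ) : ℝ) :=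
  completion_eq_omega_type_series_general E Γ
end

section
/- Let E be a field of characteristic p > 0, Γ an ordered subgroup of ℝ with ⋂_n p^nΓ = (0). Every element of E((t^Γ)) that is separably algebraic over E(t^Γ) has support that is either finite, or of order type ω and cofinal in ℝ. -/
set_option synthInstance.maxHeartbeats 1000000
set_option maxHeartbeats 1000000

open Filter Function Set Topology
open scoped Pointwise

/-!
Since `x` is algebraic over `E(t^Γ)`, there is a relation `∑ cₙ x ^ (p ^ n) = 0` whose coefficients
`cₙ` have finite support, and the support of `x ^ (p ^ n)` is `p ^ n • supp x`. If the support of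
`x` is infinite and its first `ω` exponents are bounded, let `s` be the least point at which it
accumulates from the left. The terms `δ + p ^ n ε` of the relation with `ε` just below `s` and
`δ + p ^ n s` minimal can only be cancelled by terms `δ' + p ^ n' ε'` with the same limit
`δ' + p ^ n' s`; taking also `n` minimal, this gives `s - ε = p ^ j (s - ε')` with `1 ≤ j ≤ N`.
Iterating from one exponent `ε₀`, we get `s - ε₀ = p ^ k (s - ε)` with `k` arbitrarily large, so
`(s - ε₀) (p ^ j - 1) = p ^ k p ^ j (ε' - ε)`. As only finitely many `j` occur, one of these nonzero
reals lies in `p ^ n Γ` for all `n`.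
-/

section WellOrder

theorem exists_strictMono_range_initial {α : Type*} [LinearOrder α] {S : Set α} (hwf : S.IsWF)
    (hinf : S.Infinite) :
    ∃ φ : ℕ → α, StrictMono φ ∧ (∀ n, φ n ∈ S) ∧ ∀ n, ∀ a ∈ S, a < φ n → a ∈ range φ := by
  have : Infinite S := hinf.to_subtype
  have : WellFoundedLT S := ⟨hwf⟩
  have hω : Ordinal.lift (Ordinal.type (α := ℕ) (· < ·)) ≤
      Ordinal.lift.{0} (Ordinal.type (α := S) (· < ·)) := by
    rw [Ordinal.type_nat_lt, Ordinal.lift_omega0, Ordinal.lift_id', ← Ordinal.aleph0_le_card,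
      Ordinal.card_type]
    exact Cardinal.aleph0_le_mk S
  obtain ⟨e⟩ := Ordinal.lift_type_le.1 hω
  refine ⟨fun n ↦ e n, fun _ _ h ↦ e.map_rel_iff.2 h, fun n ↦ (e n).2, fun n a ha han ↦ ?_⟩
  obtain ⟨k, hk⟩ := e.mem_range_of_rel (b := ⟨a, ha⟩) han
  exact ⟨k, congrArg Subtype.val hk⟩

/-- The points at which `T` accumulates from the left. For well-ordered `T`, the least one is the
supremum of the first `ω` elements of `T`. -/
def leftAccPts {α : Type*} [Preorder α] [TopologicalSpace α] (T : Set α) : Set α :=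
  {s | ∃ᶠ z in 𝓝[<] s, z ∈ T}

theorem eventually_notMem_of_lt_of_mem_lowerBounds_leftAccPts {α : Type*} [Preorder α]
    [TopologicalSpace α] {T : Set α} {s u : α} (hs : s ∈ lowerBounds (leftAccPts T)) (hu : u < s) :
    ∀ᶠ z in 𝓝[<] u, z ∉ T :=
  not_frequently.1 fun h ↦ hu.not_ge (hs h)

theorem exists_isLeast_leftAccPts {α : Type*} [ConditionallyCompleteLinearOrder α]
    [TopologicalSpace α] [OrderTopology α] {T : Set α} {φ : ℕ → α} (hφ : StrictMono φ)
    (hbdd : BddAbove (range φ)) (hmem : ∀ n, φ n ∈ T)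
    (hinit : ∀ n, ∀ a ∈ T, a < φ n → a ∈ range φ) :
    ∃ s, IsLeast (leftAccPts T) s := by
  have hlim := tendsto_atTop_ciSup hφ.monotone hbdd
  have hlt (n : ℕ) : φ n < ⨆ k, φ k := (hφ n.lt_succ_self).trans_le (le_ciSup hbdd _)
  refine ⟨⨆ n, φ n, ?_, fun u hu ↦ not_lt.1 fun hlt' ↦ hu ?_⟩
  · exact (tendsto_nhdsWithin_iff.2 ⟨hlim, .of_forall hlt⟩).frequently (.of_forall hmem)
  · obtain ⟨k, hk⟩ := exists_lt_of_lt_ciSup hlt'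
    have hfin : (φ '' Iio k).Finite := (finite_Iio k).image φ
    have hout : ∀ᶠ z in 𝓝[<] u, z ∉ φ '' Iio k :=
      (nhdsLT_le_nhdsNE u).trans (nhdsNE_le_cofinite u) hfin.compl_mem_cofinite
    filter_upwards [hout, self_mem_nhdsWithin] with z hz hzu hzT
    have hzk : z < φ k := lt_trans hzu hk
    obtain ⟨i, rfl⟩ := hinit k z hzT hzk
    exact hz ⟨i, hφ.lt_iff_lt.1 hzk, rfl⟩

end WellOrder

section Contraction

variable {𝕜 : Type*} [Field 𝕜] [LinearOrder 𝕜] [IsStrictOrderedRing 𝕜]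

theorem exists_iterate_contracting {T : Set 𝕜} {p b s : 𝕜} (hp : 1 ≤ p)
    (hstep : ∀ z ∈ T ∩ Ioo b s, ∃ j ≥ 1, ∃ z' ∈ T, s - z = p ^ j * (s - z')) {z₀ : 𝕜}
    (hz₀ : z₀ ∈ T ∩ Ioo b s) (n : ℕ) :
    ∃ k ≥ n, ∃ z ∈ T ∩ Ioo b s, s - z₀ = p ^ k * (s - z) := by
  induction n with
  | zero => exact ⟨0, le_rfl, z₀, hz₀, by simp⟩
  | succ n ih =>
    obtain ⟨k, hk, z, hz, hzk⟩ := ih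
    obtain ⟨j, hj, z', hz'T, hz'⟩ := hstep z hz
    obtain ⟨-, hbz, hzs⟩ := hz
    have hpj : 1 ≤ p ^ j := one_le_pow₀ hp
    have hz's : 0 < s - z' := pos_of_mul_pos_right (hz' ▸ sub_pos.2 hzs) (by positivity)
    have hzz' : s - z' ≤ s - z := hz' ▸ le_mul_of_one_le_left hz's.le hpj
    exact ⟨k + j, by omega, z', ⟨hz'T, by linarith, by linarith⟩,
      by rw [hzk, hz', pow_add, mul_assoc]⟩

variable [TopologicalSpace 𝕜] [OrderTopology 𝕜]

theorem eventually_exists_contracting {T : Set 𝕜} {p s : 𝕜} (hp : 0 < p)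
    (hs : s ∈ lowerBounds (leftAccPts T)) {Q : Set (ℕ × 𝕜)} (hQ : Q.Finite) (hQ₀ : Q.Nonempty)
    (hQT : ∀ q₀ ∈ Q, ∀ z₀ ∈ T, ∃ q ∈ Q, q ≠ q₀ ∧ ∃ z ∈ T,
      q.2 + p ^ q.1 * z = q₀.2 + p ^ q₀.1 * z₀) :
    ∃ N, ∀ᶠ z in 𝓝[<] s, z ∈ T →
      ∃ j ∈ Finset.Icc 1 N, ∃ z' ∈ T, s - z = p ^ j * (s - z') := by
  -- Distinct pairs with the same limit exponent `μ` have distinct powers of `p`; minimizing these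
  -- in second place makes the quotient of the two powers a positive power of `p`.
  let μ : ℕ × 𝕜 → 𝕜 := fun q ↦ q.2 + p ^ q.1 * s
  obtain ⟨q₀, hq₀, hmin⟩ := exists_min_image Q (fun q ↦ toLex (μ q, q.1)) hQ hQ₀
  have hgap : ∀ᶠ z in 𝓝[<] s, ∀ q ∈ Q, μ q₀ < μ q →
      (q₀.2 + p ^ q₀.1 * z - q.2) / p ^ q.1 ∉ T := by
    refine (eventually_all_finite hQ).2 fun q _ ↦ eventually_imp_distrib_left.2 fun hlt ↦ ?_
    have hu : (μ q₀ - q.2) / p ^ q.1 < s := by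
      rw [div_lt_iff₀' (by positivity)]
      exact sub_left_lt_of_lt_add hlt
    have hcont : Continuous fun z ↦ (q₀.2 + p ^ q₀.1 * z - q.2) / p ^ q.1 := by fun_prop
    refine (hcont.continuousWithinAt.tendsto_nhdsWithin fun z (hz : z < s) ↦ ?_).eventually
      (eventually_notMem_of_lt_of_mem_lowerBounds_leftAccPts hs hu)
    change (_ : 𝕜) / _ < _ / _
    gcongr
  obtain ⟨N, hN⟩ := (hQ.image Prod.fst).bddAbove
  refine ⟨N, ?_⟩
  filter_upwards [hgap] with z hz hzT
  obtain ⟨q, hq, hne, z', hz'T, hz'⟩ := hQT q₀ hq₀ z hzT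
  have hz'eq : (q₀.2 + p ^ q₀.1 * z - q.2) / p ^ q.1 = z' := by
    rw [← hz']
    field_simp
    ring
  have hμ : ¬ μ q₀ < μ q := fun h ↦ hz q hq h (hz'eq ▸ hz'T)
  obtain ⟨hμq, hle⟩ := (Prod.Lex.toLex_le_toLex.1 (hmin q hq)).resolve_left hμ
  change q₀.2 + p ^ q₀.1 * s = q.2 + p ^ q.1 * s at hμq
  have hlt : q₀.1 < q.1 := by
    refine hle.lt_of_ne fun (h : q₀.1 = q.1) ↦ hne (Prod.ext h.symm ?_)
    exact add_right_cancel (h ▸ hμq.symm)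
  refine ⟨q.1 - q₀.1, Finset.mem_Icc.2 ⟨by omega, (Nat.sub_le _ _).trans (hN ⟨q, hq, rfl⟩)⟩,
    z', hz'T, ?_⟩
  have hpow : p ^ q.1 = p ^ q₀.1 * p ^ (q.1 - q₀.1) := by
    rw [← pow_add, Nat.add_sub_cancel' hle]
  refine mul_left_cancel₀ (pow_ne_zero q₀.1 hp.ne') ?_
  linear_combination hμq + hz' + (s - z') * hpow

theorem exists_ne_zero_forall_eq_pow_mul_of_contracting {Γ : AddSubgroup 𝕜} {T : Set 𝕜}
    (hT : T ⊆ Γ) {p : ℕ} (hp : 1 < p) {s : 𝕜} (hacc : s ∈ leftAccPts T) {N : ℕ}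
    (hstep : ∀ᶠ z in 𝓝[<] s, z ∈ T →
      ∃ j ∈ Finset.Icc 1 N, ∃ z' ∈ T, s - z = (p : 𝕜) ^ j * (s - z')) :
    ∃ r : 𝕜, r ≠ 0 ∧ ∀ n : ℕ, ∃ g ∈ Γ, r = (p : 𝕜) ^ n * g := by
  have hp' : (1 : 𝕜) < p := mod_cast hp
  obtain ⟨b, hb, hbs⟩ := mem_nhdsLT_iff_exists_Ioo_subset.1 hstep
  obtain ⟨z₀, hz₀T, hz₀⟩ := (Frequently.and_eventually hacc (Ioo_mem_nhdsLT hb)).exists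
  have hiter := exists_iterate_contracting (T := T) hp'.le (fun z hz ↦ by
    obtain ⟨j, hj, h⟩ := hbs hz.2 hz.1
    exact ⟨j, (Finset.mem_Icc.1 hj).1, h⟩) ⟨hz₀T, hz₀⟩
  by_contra! hdiv
  have hne (j : ℕ) (hj : j ∈ Finset.Icc 1 N) : (s - z₀) * ((p : 𝕜) ^ j - 1) ≠ 0 :=
    mul_ne_zero (sub_pos.2 hz₀.2).ne'
      (sub_pos.2 (one_lt_pow₀ hp' (Nat.one_le_iff_ne_zero.1 (Finset.mem_Icc.1 hj).1))).ne'
  choose! n hn using fun j hj ↦ hdiv _ (hne j hj)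
  obtain ⟨k, hk, z, ⟨hzT, hz⟩, hzk⟩ := hiter ((Finset.Icc 1 N).sup n)
  obtain ⟨j, hj, z', hz'T, hz'⟩ := hbs hz hzT
  have hnk : n j ≤ k := (Finset.le_sup hj).trans hk
  refine hn j hj ((p ^ (k - n j) * p ^ j) • (z' - z))
    (Γ.nsmul_mem (Γ.sub_mem (hT hz'T) (hT hzT)) _) ?_
  have hpow : (p : 𝕜) ^ k = p ^ n j * p ^ (k - n j) := by
    rw [← pow_add, Nat.add_sub_cancel' hnk]
  rw [nsmul_eq_mul, hzk, hpow]
  push_cast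
  linear_combination -((p : 𝕜) ^ n j * p ^ (k - n j)) * hz'

end Contraction

section HahnSeriesCoeff

open HahnSeries

section PartialOrder

variable {Γ R : Type*} [PartialOrder Γ]

/-- The part of a Hahn series whose exponents lie in `s`, for isolating the terms of a series that
contribute to a given coefficient of one of its powers. -/
noncomputable def restrictSupport [Zero R] (x : HahnSeries Γ R) (s : Set Γ) : HahnSeries Γ R where
  coeff := s.indicator x.coeff
  isPWO_support' := x.isPWO_support.mono (support_indicator.subset.trans inter_subset_right)

theorem coeff_restrictSupport [Zero R] (x : HahnSeries Γ R) (s : Set Γ) (γ : Γ) :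
    (restrictSupport x s).coeff γ = s.indicator x.coeff γ :=
  rfl

theorem support_restrictSupport [Zero R] (x : HahnSeries Γ R) (s : Set Γ) :
    (restrictSupport x s).support = s ∩ x.support :=
  support_indicator

variable [AddCommMonoid Γ] [IsOrderedCancelAddMonoid Γ]

theorem support_pow_subset [Semiring R] (x : HahnSeries Γ R) (n : ℕ) :
    (x ^ n).support ⊆ n • x.support := by
  induction n with
  | zero => exact support_single_subset
  | succ n ih =>
    rw [pow_succ, succ_nsmul]
    exact support_mul_subset.trans (add_subset_add_right ih)

theorem exists_ne_add_eq_of_sum_mul_eq_zero [NonUnitalNonAssocSemiring R] [NoZeroDivisors R]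
    {ι : Type*} {s : Finset ι} {c y : ι → HahnSeries Γ R} (h : ∑ i ∈ s, c i * y i = 0) {i₀ : ι}
    (hi₀ : i₀ ∈ s) {δ₀ ε₀ : Γ} (hδ₀ : δ₀ ∈ (c i₀).support) (hε₀ : ε₀ ∈ (y i₀).support) :
    ∃ i ∈ s, ∃ δ ∈ (c i).support, ∃ ε ∈ (y i).support,
      (i, δ) ≠ (i₀, δ₀) ∧ δ + ε = δ₀ + ε₀ := by
  have hcoeff := congrArg (HahnSeries.coeff · (δ₀ + ε₀)) h
  simp only [coeff_sum, coeff_mul, coeff_zero, Finset.sum_sigma'] at hcoeff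
  by_contra! hne
  rw [Finset.sum_eq_single_of_mem ⟨i₀, δ₀, ε₀⟩ (by simp [*])] at hcoeff
  · exact mul_ne_zero hδ₀ hε₀ hcoeff
  · rintro ⟨i, δ, ε⟩ hmem hne'
    simp only [Finset.mem_sigma, Finset.mem_antidiagonal, HahnSeries.mem_support] at hmem
    obtain ⟨hi, hδ, hε, hsum⟩ := hmem
    refine absurd hsum (hne i hi δ hδ ε hε fun h' ↦ hne' ?_)
    obtain ⟨rfl, rfl⟩ := Prod.mk.inj h'
    rw [add_left_cancel hsum]

end PartialOrder

variable {Γ R : Type*} [LinearOrder Γ] [AddCommMonoid Γ] [IsOrderedCancelAddMonoid Γ]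

theorem exists_nsmul_le_of_mem_support_pow [Semiring R] {x : HahnSeries Γ R} {n : ℕ} (hn : n ≠ 0)
    {γ : Γ} (hγ : γ ∈ (x ^ n).support) :
    (∃ ε ∈ x.support, n • ε ≤ γ) ∧ ∃ ε ∈ x.support, γ ≤ n • ε := by
  obtain ⟨f, rfl⟩ := Set.mem_nsmul.1 (support_pow_subset x n hγ)
  have : Nonempty (Fin n) := Fin.pos_iff_nonempty.1 hn.bot_lt
  have hsum : ∑ i, n • (f i : Γ) = ∑ _i : Fin n, (List.ofFn fun i ↦ (f i : Γ)).sum := by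
    simp [List.sum_ofFn, Finset.sum_nsmul]
  obtain ⟨i, -, hi⟩ := Finset.exists_le_of_sum_le Finset.univ_nonempty hsum.le
  obtain ⟨k, -, hk⟩ := Finset.exists_le_of_sum_le Finset.univ_nonempty hsum.ge
  exact ⟨⟨f i, (f i).2, hi⟩, f k, (f k).2, hk⟩

theorem coeff_pow_expChar_pow_eq_coeff_restrictSupport [CommSemiring R] (p : ℕ) [ExpChar R p]
    (n : ℕ) (x : HahnSeries Γ R) (γ : Γ) :
    (x ^ p ^ n).coeff γ = ((restrictSupport x {ε | p ^ n • ε = γ}) ^ p ^ n).coeff γ := by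
  have : ExpChar (HahnSeries Γ R) p :=
    expChar_of_injective_ringHom (f := (C : R →+* HahnSeries Γ R)) C_injective p
  have hp : p ^ n ≠ 0 := pow_ne_zero n (expChar_pos R p).ne'
  -- Frobenius is additive, and the powers of the two outer parts of `x` do not reach degree `γ`.
  have hsplit : x = restrictSupport x {ε | p ^ n • ε < γ} +
      restrictSupport x {ε | p ^ n • ε = γ} + restrictSupport x {ε | γ < p ^ n • ε} := by
    ext ε
    rcases lt_trichotomy (p ^ n • ε) γ with h | h | h
    · simp [coeff_restrictSupport, h, h.ne, h.not_gt]
    · simp [coeff_restrictSupport, h]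
    · simp [coeff_restrictSupport, h, h.ne', h.not_gt]
  have hlow : ((restrictSupport x {ε | p ^ n • ε < γ}) ^ p ^ n).coeff γ = 0 := by
    by_contra h
    obtain ⟨-, ε, hε, hγε⟩ := exists_nsmul_le_of_mem_support_pow hp h
    rw [support_restrictSupport] at hε
    exact hγε.not_gt hε.1
  have hhigh : ((restrictSupport x {ε | γ < p ^ n • ε}) ^ p ^ n).coeff γ = 0 := by
    by_contra h
    obtain ⟨⟨ε, hε, hεγ⟩, -⟩ := exists_nsmul_le_of_mem_support_pow hp h
    rw [support_restrictSupport] at hε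
    exact hεγ.not_gt hε.1
  conv_lhs => rw [hsplit]
  rw [add_pow_expChar_pow, add_pow_expChar_pow, coeff_add, coeff_add, hlow, hhigh, zero_add,
    add_zero]

theorem support_pow_expChar_pow [CommSemiring R] [IsReduced R] (p : ℕ) [ExpChar R p] (n : ℕ)
    (x : HahnSeries Γ R) : (x ^ p ^ n).support = (p ^ n • ·) '' x.support := by
  have hp : p ^ n ≠ 0 := pow_ne_zero n (expChar_pos R p).ne'
  have hinj : Function.Injective fun ε : Γ ↦ p ^ n • ε := (nsmul_right_strictMono hp).injective
  ext γ
  rw [HahnSeries.mem_support, coeff_pow_expChar_pow_eq_coeff_restrictSupport p]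
  constructor
  · intro hγ
    obtain ⟨⟨ε, hε, -⟩, -⟩ := exists_nsmul_le_of_mem_support_pow hp hγ
    rw [support_restrictSupport] at hε
    exact ⟨ε, hε.2, hε.1⟩
  · rintro ⟨ε, hε, rfl⟩
    have hsingle : restrictSupport x {δ | p ^ n • δ = p ^ n • ε} = single ε (x.coeff ε) := by
      ext δ
      rcases eq_or_ne δ ε with rfl | h
      · simp [coeff_restrictSupport]
      · simp [coeff_restrictSupport, hinj.eq_iff.not.2 h, h]
    rw [hsingle, single_pow, coeff_single_same]
    exact pow_ne_zero _ hε

end HahnSeriesCoeff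

section Algebraic

open HahnSeries
open scoped IntermediateField.algebraAdjoinAdjoin

theorem not_linearIndependent_adjoin_pow {F L : Type*} [Field F] [Field L] [Algebra F L]
    {S : Set L} {x : L} (hx : IsAlgebraic (IntermediateField.adjoin F S) x) (e : ℕ → ℕ) :
    ¬ LinearIndependent (Algebra.adjoin F S) fun n ↦ x ^ e n := by
  let K := IntermediateField.adjoin F S
  intro h
  have : Module.Finite K (IntermediateField.adjoin K {x}) :=
    IntermediateField.adjoin.finiteDimensional hx.isIntegral
  rw [LinearIndependent.iff_fractionRing _ K] at h
  refine Module.Finite.not_linearIndependent_of_infinite (R := K)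
    (fun n ↦ IntermediateField.AdjoinSimple.gen K x ^ e n) ?_
  exact LinearIndependent.of_comp (IntermediateField.adjoin K {x}).val.toLinearMap h

theorem finite_support_of_mem_adjoin {Γ R : Type*} [PartialOrder Γ] [AddCommMonoid Γ]
    [IsOrderedCancelAddMonoid Γ] [CommSemiring R] {y : HahnSeries Γ R}
    (hy : y ∈ Algebra.adjoin R {y | ∃ γ : Γ, y = single γ (1 : R)}) :
    y.support.Finite := by
  induction hy using Algebra.adjoin_induction with
  | mem y hy =>
    obtain ⟨γ, rfl⟩ := hy
    exact (finite_singleton γ).subset support_single_subset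
  | algebraMap r => exact (finite_singleton 0).subset support_single_subset
  | add y z _ _ hy hz => exact (hy.union hz).subset (support_add_subset y z)
  | mul y z _ _ hy hz => exact (hy.add hz).subset support_mul_subset

theorem exists_sum_mul_pow_eq_zero {E Γ : Type*} [Field E] [AddCommGroup Γ] [LinearOrder Γ]
    [IsOrderedAddMonoid Γ] {x : HahnSeries Γ E}
    (hx : IsAlgebraic (IntermediateField.adjoin E {y | ∃ γ : Γ, y = single γ (1 : E)}) x)
    (e : ℕ → ℕ) :
    ∃ (s : Finset ℕ) (c : ℕ → HahnSeries Γ E), (∃ n ∈ s, c n ≠ 0) ∧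
      (∀ n, (c n).support.Finite) ∧ ∑ n ∈ s, c n * x ^ e n = 0 := by
  have hdep := not_linearIndependent_adjoin_pow hx e
  rw [not_linearIndependent_iff] at hdep
  obtain ⟨s, c, hsum, n, hn, hcn⟩ := hdep
  exact ⟨s, fun n ↦ c n, ⟨n, hn, Subtype.coe_ne_coe.2 hcn⟩,
    fun n ↦ finite_support_of_mem_adjoin (c n).2, hsum⟩

theorem exists_finite_exponent_relation {E Γ : Type*} [Field E] (p : ℕ) [ExpChar E p]
    [AddCommGroup Γ] [LinearOrder Γ] [IsOrderedAddMonoid Γ] {x : HahnSeries Γ E}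
    (hx : IsAlgebraic (IntermediateField.adjoin E {y | ∃ γ : Γ, y = single γ (1 : E)}) x) :
    ∃ Q : Set (ℕ × Γ), Q.Finite ∧ Q.Nonempty ∧ ∀ q₀ ∈ Q, ∀ ε₀ ∈ x.support,
      ∃ q ∈ Q, q ≠ q₀ ∧ ∃ ε ∈ x.support, q.2 + p ^ q.1 • ε = q₀.2 + p ^ q₀.1 • ε₀ := by
  obtain ⟨s, c, ⟨m, hm, hcm⟩, hfin, hsum⟩ := exists_sum_mul_pow_eq_zero hx (p ^ ·)
  refine ⟨⋃ n ∈ s, Prod.mk n '' (c n).support,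
    s.finite_toSet.biUnion fun n _ ↦ (hfin n).image _, ?_, ?_⟩
  · obtain ⟨δ, hδ⟩ := support_nonempty_iff.2 hcm
    exact ⟨(m, δ), mem_biUnion hm (mem_image_of_mem _ hδ)⟩
  · simp only [mem_iUnion₂]
    rintro _ ⟨n₀, hn₀, δ₀, hδ₀, rfl⟩ ε₀ hε₀
    have hε₀p : p ^ n₀ • ε₀ ∈ (x ^ p ^ n₀).support := by
      rw [support_pow_expChar_pow]
      exact mem_image_of_mem _ hε₀
    obtain ⟨n, hn, δ, hδ, ε', hε', hne, heq⟩ :=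
      exists_ne_add_eq_of_sum_mul_eq_zero hsum hn₀ hδ₀ hε₀p
    rw [support_pow_expChar_pow] at hε'
    obtain ⟨ε, hε, rfl⟩ := hε'
    exact ⟨(n, δ), ⟨n, hn, δ, hδ, rfl⟩, hne, ε, hε, heq⟩

theorem eventually_exists_contracting_of_isAlgebraic {E : Type*} [Field E] (p : ℕ) [ExpChar E p]
    {Γ : AddSubgroup ℝ} {x : HahnSeries Γ E}
    (hx : IsAlgebraic (IntermediateField.adjoin E {y | ∃ γ : Γ, y = single γ (1 : E)}) x) {s : ℝ}
    (hs : s ∈ lowerBounds (leftAccPts ((↑) '' x.support))) :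
    ∃ N, ∀ᶠ z in 𝓝[<] s, z ∈ ((↑) '' x.support : Set ℝ) → ∃ j ∈ Finset.Icc 1 N,
      ∃ z' ∈ ((↑) '' x.support : Set ℝ), s - z = (p : ℝ) ^ j * (s - z') := by
  have hp : (0 : ℝ) < p := mod_cast expChar_pos E p
  obtain ⟨Q, hQ, hQ₀, hQx⟩ := exists_finite_exponent_relation p hx
  refine eventually_exists_contracting hp hs (hQ.image (Prod.map id (↑))) (hQ₀.image _) ?_
  rintro _ ⟨q₀, hq₀, rfl⟩ _ ⟨ε₀, hε₀, rfl⟩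
  obtain ⟨q, hq, hne, ε, hε, heq⟩ := hQx q₀ hq₀ ε₀ hε₀
  have hinj : Function.Injective (Prod.map id (↑) : ℕ × Γ → ℕ × ℝ) :=
    Function.injective_id.prodMap Subtype.val_injective
  refine ⟨_, mem_image_of_mem _ hq, hinj.ne hne, ε, mem_image_of_mem _ hε, ?_⟩
  simpa using congrArg ((↑) : Γ → ℝ) heq

end Algebraic

theorem separably_algebraic_support_omega_general (E : Type*) [Field E] (p : ℕ) [Fact p.Prime]
    [CharP E p] (Γ : AddSubgroup ℝ)
    (hΓ : ∀ r : ℝ, (∀ n : ℕ, ∃ s ∈ Γ, r = (p : ℝ) ^ n * s) → r = 0)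
    (x : HahnSeries Γ E)
    (hx : IsAlgebraic
      (IntermediateField.adjoin E {y | ∃ γ : Γ, y = HahnSeries.single γ (1 : E)}) x) :
    x.support.Finite ∨
      ∃ φ : ℕ → Γ, StrictMono φ ∧ range φ = x.support ∧ ∀ r : ℝ, ∃ k : ℕ, r < φ k := by
  refine or_iff_not_imp_left.2 fun hinf ↦ ?_
  obtain ⟨φ, hφ, hmem, hinit⟩ := exists_strictMono_range_initial x.isWF_support hinf
  have hcof (r : ℝ) : ∃ k, r < φ k := by
    by_contra! hr
    obtain ⟨s, hacc, hs⟩ := exists_isLeast_leftAccPts (T := (↑) '' x.support)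
      (φ := fun n ↦ (φ n : ℝ)) hφ ⟨r, forall_mem_range.2 hr⟩ (fun n ↦ mem_image_of_mem _ (hmem n))
      (by
        rintro n _ ⟨a, ha, rfl⟩ han
        obtain ⟨k, rfl⟩ := hinit n a ha han
        exact mem_range_self k)
    obtain ⟨N, hstep⟩ := eventually_exists_contracting_of_isAlgebraic p hx hs
    obtain ⟨c, hc, hdiv⟩ := exists_ne_zero_forall_eq_pow_mul_of_contracting
      (image_subset_iff.2 fun γ _ ↦ γ.2) (Fact.out : p.Prime).one_lt hacc hstep
    exact hc (hΓ c hdiv)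
  refine ⟨φ, hφ, (range_subset_iff.2 hmem).antisymm fun γ hγ ↦ ?_, hcof⟩
  obtain ⟨k, hk⟩ := hcof γ
  exact hinit k γ hγ hk

/-- Proposition (3.9) of the paper: let `E` be a field of characteristic `p > 0` and `Γ`
an ordered subgroup of `ℝ` with `⋂_n p^n Γ = (0)`.  Every element of `E((t^Γ))` which is
separably algebraic over `E(t^Γ)` has support either finite, or of order type `ω` and
cofinal in `ℝ`. -/
theorem separably_algebraic_support_omega (E : Type*) [Field E] (p : ℕ) [Fact p.Prime]
    [CharP E p] (Γ : AddSubgroup ℝ)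
    (hΓ : ∀ r : ℝ, (∀ n : ℕ, ∃ s ∈ Γ, r = (p : ℝ) ^ n * s) → r = 0)
    (x : HahnSeries ↥Γ E)
    (hx : ∃ P : Polynomial
        ↥(Subfield.closure
            (Set.range (HahnSeries.C : E →+* HahnSeries ↥Γ E) ∪
              {y | ∃ γ : ↥Γ, y = HahnSeries.single γ (1 : E)})),
      P ≠ 0 ∧ P.Separable ∧
        Polynomial.eval₂
          (Subfield.subtype
            (Subfield.closure
              (Set.range (HahnSeries.C : E →+* HahnSeries ↥Γ E) ∪
                {y | ∃ γ : ↥Γ, y = HahnSeries.single γ (1 : E)}))) x P = 0) :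
    x.support.Finite ∨
      ∃ φ : ℕ → ↥Γ, StrictMono φ ∧ Set.range φ = x.support ∧
        ∀ r : ℝ, ∃ k : ℕ, r < (φ k : ℝ) := by
  obtain ⟨P, hP₀, -, hPx⟩ := hx
  -- The subfield closure in `hx` unfolds to `IntermediateField.adjoin E`, with `C` as `algebraMap`.
  exact separably_algebraic_support_omega_general E p Γ hΓ x ⟨P, hP₀, hPx⟩
end
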